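/- arXiv:2507.18617 — 5 statements merged into one kernel-verified Lean document; each statement's English description precedes it below -/
import Mathlib

section
/- Let f : ℝ → ℝ be continuously differentiable, let x* be a fixed point of f with |f'(x*)| < 1, let x ∈ ℝ satisfy f^n(x) → x* as n → ∞, and let O : ℝ → ℝ be continuously differentiable. Then the time average Ō(x) exists and equals O(x*), the drift variance σ_N²(x) converges to 0 as N → ∞, and moreover there exists K > 0 such that σ_N²(x) ≤ K/(N+1) for all N ≥ 0. -/
/-!
Near the fixed point `f` contracts by any fixed factor `q` with `|f'(x*)| < q < 1`, so the
trajectory approaches `x*` like `q ^ n` (`iterate_sub_isBigO_geometric`), and so does the observable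
along it, by differentiability of `O` at `x*`. Hence the increments of the drift are geometrically
small and the drift itself converges geometrically to some limit `D`. A variance is at most the mean
square deviation from any constant; taking `D` as that constant bounds `σ_N²` by `1 / (N + 1)` times
a convergent geometric series. Since a variance is nonnegative, `σ_N² → 0` follows by squeezing.
-/

open Filter

/-- The drift of observable `O` along the trajectory of `x` under `f`, relative to the value
`c` (the time average of `O` on the trajectory): `Δ_N = Σ_{n=0}^N [O(f^[n] x) − c]`. -/
noncomputable def drift (f O : ℝ → ℝ) (x c : ℝ) (N : ℕ) : ℝ :=
  ∑ n ∈ Finset.range (N + 1), (O (f^[n] x) - c)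

/-- The drift variance
`σ_N² = (1/(N+1)) Σ_{n=0}^N Δ_n² − ((1/(N+1)) Σ_{n=0}^N Δ_n)²`. -/
noncomputable def driftVar (f O : ℝ → ℝ) (x c : ℝ) (N : ℕ) : ℝ :=
  (1 / ((N : ℝ) + 1)) * ∑ n ∈ Finset.range (N + 1), (drift f O x c n) ^ 2
    - ((1 / ((N : ℝ) + 1)) * ∑ n ∈ Finset.range (N + 1), drift f O x c n) ^ 2

open Asymptotics

/-- The rate of convergence to a stable fixed point: differentiability at `p` gives
`|f y - p| ≤ q * |y - p|` for `y` near `p`, and a convergent trajectory eventually stays there. -/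
lemma iterate_sub_isBigO_geometric {f : ℝ → ℝ} {p x q : ℝ} (hf : DifferentiableAt ℝ f p)
    (hfix : f p = p) (hq : |deriv f p| < q)
    (hconv : Tendsto (fun n : ℕ => f^[n] x) atTop (nhds p)) :
    (fun n : ℕ => f^[n] x - p) =O[atTop] (fun n : ℕ => q ^ n) := by
  have hq0 : 0 < q := (abs_nonneg _).trans_lt hq
  have hloc : ∀ᶠ y in nhds p, |f y - p| ≤ q * |y - p| := by
    have h := (hasDerivAt_iff_isLittleO.mp hf.hasDerivAt).def (sub_pos.mpr hq)
    filter_upwards [h] with y hy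
    simp only [Real.norm_eq_abs, smul_eq_mul, hfix] at hy
    calc |f y - p| = |(f y - p - (y - p) * deriv f p) + (y - p) * deriv f p| := by ring_nf
      _ ≤ |f y - p - (y - p) * deriv f p| + |(y - p) * deriv f p| := abs_add_le _ _
      _ ≤ (q - |deriv f p|) * |y - p| + |y - p| * |deriv f p| := by
          rw [abs_mul (y - p)]; gcongr
      _ = q * |y - p| := by ring
  obtain ⟨m, hm⟩ := eventually_atTop.mp (hconv.eventually hloc)
  have hgeom : ∀ k : ℕ, |f^[m + k] x - p| ≤ |f^[m] x - p| * q ^ k := by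
    intro k
    induction k with
    | zero => simp
    | succ k ih =>
      rw [← add_assoc, Function.iterate_succ_apply']
      calc |f (f^[m + k] x) - p| ≤ q * |f^[m + k] x - p| := hm _ (Nat.le_add_right _ _)
        _ ≤ q * (|f^[m] x - p| * q ^ k) := by gcongr
        _ = |f^[m] x - p| * q ^ (k + 1) := by ring
  refine IsBigO.of_bound (|f^[m] x - p| / q ^ m) ?_
  filter_upwards [eventually_ge_atTop m] with n hn
  obtain ⟨k, rfl⟩ := Nat.exists_eq_add_of_le hn
  rw [Real.norm_eq_abs, Real.norm_eq_abs, abs_of_pos (pow_pos hq0 _)]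
  refine (hgeom k).trans_eq ?_
  rw [pow_add]
  field_simp

/-- A variance is the mean square deviation from a constant `D`, less the squared
deviation of the mean from `D`. -/
lemma driftVar_eq_sub_sq (f O : ℝ → ℝ) (x c D : ℝ) (N : ℕ) :
    driftVar f O x c N =
      (1 / ((N : ℝ) + 1)) * ∑ n ∈ Finset.range (N + 1), (drift f O x c n - D) ^ 2
        - ((1 / ((N : ℝ) + 1)) * ∑ n ∈ Finset.range (N + 1), drift f O x c n - D) ^ 2 := by
  have hN : ((N : ℝ) + 1) ≠ 0 := by positivity
  simp only [driftVar, sub_sq, Finset.sum_add_distrib, Finset.sum_sub_distrib, Finset.sum_const,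
    Finset.card_range, ← Finset.sum_mul, ← Finset.mul_sum, nsmul_eq_mul]
  push_cast
  field_simp
  ring

lemma driftVar_nonneg (f O : ℝ → ℝ) (x c : ℝ) (N : ℕ) : 0 ≤ driftVar f O x c N := by
  -- With `D` the mean, the correction term of `driftVar_eq_sub_sq` vanishes.
  rw [driftVar_eq_sub_sq f O x c
    ((1 / ((N : ℝ) + 1)) * ∑ n ∈ Finset.range (N + 1), drift f O x c n), sub_self]
  have : 0 ≤ ∑ n ∈ Finset.range (N + 1), (drift f O x c n -
      (1 / ((N : ℝ) + 1)) * ∑ n ∈ Finset.range (N + 1), drift f O x c n) ^ 2 :=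
    Finset.sum_nonneg fun _ _ => sq_nonneg _
  have h1 : 0 ≤ 1 / ((N : ℝ) + 1) := by positivity
  simpa using mul_nonneg h1 this

/-- For a trajectory converging to a stable fixed point, the time average of a continuously
differentiable observable `O` exists and equals `O(x*)`, the drift variance converges to `0`,
and it decays as `O(1/N)`. -/
theorem driftVar_decay_fixed_point
    (f : ℝ → ℝ) (hf : ContDiff ℝ 1 f)
    (xstar : ℝ) (hfix : f xstar = xstar) (hder : |deriv f xstar| < 1)
    (x : ℝ) (hconv : Tendsto (fun n : ℕ => f^[n] x) atTop (nhds xstar))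
    (O : ℝ → ℝ) (hO : ContDiff ℝ 1 O) :
    Tendsto (fun N : ℕ => (1 / ((N : ℝ) + 1)) * ∑ n ∈ Finset.range (N + 1), O (f^[n] x))
        atTop (nhds (O xstar)) ∧
    Tendsto (fun N : ℕ => driftVar f O x (O xstar) N) atTop (nhds 0) ∧
    ∃ K > (0 : ℝ), ∀ N : ℕ, driftVar f O x (O xstar) N ≤ K / ((N : ℝ) + 1) := by
  obtain ⟨q, hq, hq1⟩ := exists_between hder
  have hq0 : 0 < q := (abs_nonneg _).trans_lt hq
  have hO' : DifferentiableAt ℝ O xstar := hO.differentiable one_ne_zero xstar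
  have hbigO : (fun n : ℕ => O (f^[n] x) - O xstar) =O[atTop] (fun n : ℕ => q ^ n) :=
    (hO'.isBigO_sub.comp_tendsto hconv).trans
      (iterate_sub_isBigO_geometric (hf.differentiable one_ne_zero xstar) hfix hq hconv)
  obtain ⟨C, hC, hbound⟩ := bound_of_isBigO_nat_atTop hbigO
  have hstep : ∀ n, dist (drift f O x (O xstar) n) (drift f O x (O xstar) (n + 1))
      ≤ (C * q) * q ^ n := by
    intro n
    have h := hbound (x := n + 1) (pow_pos hq0 _).ne'
    rw [Real.norm_eq_abs, Real.norm_eq_abs, abs_of_pos (pow_pos hq0 _)] at h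
    rw [dist_comm, Real.dist_eq, drift, drift, Finset.sum_range_succ _ (n + 1), add_sub_cancel_left]
    exact h.trans_eq (by ring)
  obtain ⟨D, hD⟩ := cauchySeq_tendsto_of_complete (cauchySeq_of_le_geometric q (C * q) hq1 hstep)
  set B : ℝ := C * q / (1 - q) with hB
  have hB0 : 0 < B := div_pos (mul_pos hC hq0) (sub_pos.mpr hq1)
  have hdev : ∀ n, (drift f O x (O xstar) n - D) ^ 2 ≤ B ^ 2 * (q ^ 2) ^ n := by
    intro n
    have h := dist_le_of_le_geometric_of_tendsto q (C * q) hq1 hstep hD n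
    rw [Real.dist_eq] at h
    calc (drift f O x (O xstar) n - D) ^ 2 = |drift f O x (O xstar) n - D| ^ 2 := (sq_abs _).symm
      _ ≤ (C * q * q ^ n / (1 - q)) ^ 2 := by gcongr
      _ = B ^ 2 * (q ^ 2) ^ n := by rw [hB, ← pow_mul, mul_comm 2 n, pow_mul]; ring
  have hq2 : q ^ 2 < 1 := by nlinarith
  have hK : 0 < B ^ 2 * (1 - q ^ 2)⁻¹ :=
    mul_pos (pow_pos hB0 2) (inv_pos.mpr (sub_pos.mpr hq2))
  have hvar : ∀ N : ℕ, driftVar f O x (O xstar) N ≤ B ^ 2 * (1 - q ^ 2)⁻¹ / ((N : ℝ) + 1) := by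
    intro N
    have hsum : ∑ n ∈ Finset.range (N + 1), (drift f O x (O xstar) n - D) ^ 2
        ≤ B ^ 2 * (1 - q ^ 2)⁻¹ :=
      calc ∑ n ∈ Finset.range (N + 1), (drift f O x (O xstar) n - D) ^ 2
          ≤ ∑ n ∈ Finset.range (N + 1), B ^ 2 * (q ^ 2) ^ n :=
            Finset.sum_le_sum fun n _ => hdev n
        _ = B ^ 2 * ∑ n ∈ Finset.range (N + 1), (q ^ 2) ^ n := by rw [Finset.mul_sum]
        _ ≤ B ^ 2 * (1 - q ^ 2)⁻¹ := by
            rw [← tsum_geometric_of_lt_one (sq_nonneg q) hq2]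
            gcongr
            exact (summable_geometric_of_lt_one (sq_nonneg q) hq2).sum_le_tsum _
              fun _ _ => by positivity
    rw [driftVar_eq_sub_sq f O x (O xstar) D]
    calc _ ≤ (1 / ((N : ℝ) + 1)) * ∑ n ∈ Finset.range (N + 1), (drift f O x (O xstar) n - D) ^ 2 :=
          sub_le_self _ (sq_nonneg _)
      _ ≤ (1 / ((N : ℝ) + 1)) * (B ^ 2 * (1 - q ^ 2)⁻¹) := by gcongr
      _ = _ := by ring
  refine ⟨?_, ?_, _, hK, hvar⟩
  · have h := ((hO'.continuousAt.tendsto.comp hconv).cesaro).comp (tendsto_add_atTop_nat 1)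
    simpa [Function.comp_def] using h
  · refine squeeze_zero (fun N => driftVar_nonneg f O x _ N) hvar ?_
    have h := (tendsto_one_div_add_atTop_nhds_zero_nat (𝕜 := ℝ)).const_mul (B ^ 2 * (1 - q ^ 2)⁻¹)
    simpa [div_eq_mul_inv] using h
end

section
/- Let f : ℝ → ℝ be such that g = f ∘ f is continuously differentiable, let {x₀*, x₁*} be a period-2 cycle of f (f(x₀*) = x₁*, f(x₁*) = x₀*) with |g'(x₀*)| < 1 and |g'(x₁*)| < 1, and let x ∈ ℝ be a point whose even iterates f^{2m}(x) converge to x₀* and whose odd iterates f^{2m+1}(x) converge to x₁*. Let O : ℝ → ℝ be continuously differentiable. Then the time average Ō(x) exists and equals (O(x₀*) + O(x₁*))/2, the drift variance σ_N²(x) converges to δ²/4 where δ = (O(x₁*) − O(x₀*))/2, and there exists K > 0 such that |σ_N²(x) − δ²/4| ≤ K/(N+1) for all N ≥ 1. -/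
/-!
Near an attracting fixed point of `g = f ∘ f` the distance to the fixed point contracts by a
factor `r < 1` per step, so (`abs_observable_sub_le_geometric`) the even and odd subsequences of
`O (f^[n] x)` approach `O x0` and `O x1` geometrically. With `c = (O x0 + O x1) / 2` and
`d = (O x0 - O x1) / 2` this says `O (f^[n] x) - c = (-1)^n d + e n`, where `|e n| ≤ C s^n` and
`s = √r < 1`.

Summing, the drift is `Δ_n = L + (-1)^n (d / 2) + t n`, where `t` is a tail of the geometrically
convergent series `∑ e` and is therefore itself summable (`exists_drift_decomposition`).
The variance does not see the constant `L`; the mean of the squares of the rest is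
`(d / 2)^2 + O(1/N)`, and its mean is `O(1/N)` because the partial sums of `(-1)^n` and of `t` are
bounded (`abs_variance_sub_le`).
-/

open Filter

/-- An orbit of `g` converging to a fixed point `p` with `|g' p| < r` converges at rate `r ^ m`,
and so does any observable that is differentiable at `p`. -/
lemma abs_observable_sub_le_geometric {g O : ℝ → ℝ} {p r : ℝ} {y : ℕ → ℝ}
    (hg : DifferentiableAt ℝ g p) (hp : g p = p) (hr : |deriv g p| < r)
    (hy : ∀ m, y (m + 1) = g (y m)) (hlim : Tendsto y atTop (nhds p))
    (hO : DifferentiableAt ℝ O p) :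
    ∃ C, ∀ m, |O (y m) - O p| ≤ C * r ^ m := by
  have hr0 : 0 < r := (abs_nonneg _).trans_lt hr
  have hcontr : ∀ᶠ z in nhds p, |g z - p| ≤ r * |z - p| := by
    have h := hg.hasDerivAt.isLittleO.def (sub_pos.2 hr)
    filter_upwards [h] with z hz
    simp only [hp, smul_eq_mul, Real.norm_eq_abs] at hz
    calc |g z - p| = |(g z - p - (z - p) * deriv g p) + (z - p) * deriv g p| := by ring_nf
      _ ≤ |g z - p - (z - p) * deriv g p| + |(z - p) * deriv g p| := abs_add_le _ _
      _ ≤ (r - |deriv g p|) * |z - p| + |z - p| * |deriv g p| := by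
        rw [abs_mul]; gcongr
      _ = r * |z - p| := by ring
  obtain ⟨M, hM⟩ := eventually_atTop.1 (hlim.eventually hcontr)
  have hgeo : ∀ k, |y (M + k) - p| ≤ |y M - p| * r ^ k := by
    intro k
    induction k with
    | zero => simp
    | succ k ih =>
      have h1 := hM (M + k) (Nat.le_add_right _ _)
      rw [← hy] at h1
      calc |y (M + (k + 1)) - p| ≤ r * |y (M + k) - p| := h1
        _ ≤ r * (|y M - p| * r ^ k) := by gcongr
        _ = |y M - p| * r ^ (k + 1) := by ring
  have hbig : (fun m => y m - p) =O[atTop] (fun m => r ^ m) := by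
    refine Asymptotics.IsBigO.of_bound (|y M - p| / r ^ M) ?_
    filter_upwards [eventually_ge_atTop M] with m hm
    obtain ⟨k, rfl⟩ := Nat.exists_eq_add_of_le hm
    have h := hgeo k
    rw [Real.norm_eq_abs, Real.norm_eq_abs, abs_of_pos (pow_pos hr0 _), pow_add]
    convert h using 1
    field_simp
  have hObig : (fun m => O (y m) - O p) =O[atTop] (fun m => r ^ m) :=
    (hO.hasDerivAt.isBigO_sub.comp_tendsto hlim).trans hbig
  obtain ⟨C, -, hC⟩ := Asymptotics.bound_of_isBigO_nat_atTop hObig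
  refine ⟨C, fun m => ?_⟩
  have h := hC (x := m) (pow_pos hr0 m).ne'
  rwa [Real.norm_eq_abs, Real.norm_eq_abs, abs_of_pos (pow_pos hr0 m)] at h

/-- The partial sums of an alternating sequence plus a geometrically small error are a constant
plus an alternating sequence of half the amplitude plus an absolutely summable tail. -/
lemma exists_drift_decomposition {a : ℕ → ℝ} {d C s : ℝ} (hs0 : 0 ≤ s) (hs1 : s < 1)
    (ha : ∀ n, |a n - (-1) ^ n * d| ≤ C * s ^ n) :
    ∃ (L : ℝ) (t : ℕ → ℝ), (Summable fun n => |t n|) ∧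
      ∀ n, ∑ k ∈ Finset.range (n + 1), a k = L + ((-1) ^ n * (d / 2) + t n) := by
  set e : ℕ → ℝ := fun n => a n - (-1) ^ n * d with he
  have hgeom : Summable fun n : ℕ => s ^ n := summable_geometric_of_lt_one hs0 hs1
  have hsum : Summable e :=
    Summable.of_norm_bounded (hgeom.mul_left C) ha
  have htail : ∀ n, |∑ k ∈ Finset.range n, e k - ∑' k, e k| ≤ C * s ^ n / (1 - s) := by
    intro n
    have h := dist_le_of_le_geometric_of_tendsto s C hs1
      (f := fun n => ∑ k ∈ Finset.range n, e k)
      (fun n => by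
        rw [dist_comm, Real.dist_eq, Finset.sum_range_succ, add_sub_cancel_left]
        exact ha n) hsum.hasSum.tendsto_sum_nat n
    rwa [Real.dist_eq] at h
  have halt : ∀ n : ℕ, ∑ k ∈ Finset.range (n + 1), (-1 : ℝ) ^ k * d
      = d / 2 + (-1) ^ n * (d / 2) := by
    intro n
    induction n with
    | zero => simp
    | succ n ih => rw [Finset.sum_range_succ, ih]; ring
  refine ⟨d / 2 + ∑' k, e k, fun n => ∑ k ∈ Finset.range (n + 1), e k - ∑' k, e k, ?_, ?_⟩
  · refine Summable.of_nonneg_of_le (fun _ => abs_nonneg _) (fun n => htail (n + 1)) ?_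
    exact (((summable_nat_add_iff 1).2 hgeom).mul_left C).div_const _
  · intro n
    have h : ∑ k ∈ Finset.range (n + 1), e k
        = ∑ k ∈ Finset.range (n + 1), a k - (d / 2 + (-1) ^ n * (d / 2)) := by
      rw [← halt, ← Finset.sum_sub_distrib]
    simp only [h]; ring

/-- The empirical variance of `L + (-1)^n h + t n`, with `t` absolutely summable, is
`h ^ 2 + O(1 / N)`. -/
lemma abs_variance_sub_le {D t : ℕ → ℝ} {L h : ℝ} (ht : Summable fun n => |t n|)
    (hD : ∀ n, D n = L + ((-1) ^ n * h + t n)) :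
    ∃ K > (0 : ℝ), ∀ N : ℕ,
      |(1 / ((N : ℝ) + 1)) * ∑ n ∈ Finset.range (N + 1), D n ^ 2
        - ((1 / ((N : ℝ) + 1)) * ∑ n ∈ Finset.range (N + 1), D n) ^ 2 - h ^ 2|
        ≤ K / ((N : ℝ) + 1) := by
  set T := ∑' n, |t n| with hT
  have hT0 : 0 ≤ T := tsum_nonneg fun _ => abs_nonneg _
  have hle : ∀ n, |t n| ≤ T := fun n => ht.le_tsum n fun _ _ => abs_nonneg _
  have hpart : ∀ N, ∑ n ∈ Finset.range N, |t n| ≤ T := fun N =>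
    ht.sum_le_tsum _ fun _ _ => abs_nonneg _
  have halt : ∀ N : ℕ, |∑ n ∈ Finset.range N, (-1 : ℝ) ^ n| ≤ 1 := by
    intro N
    rw [neg_one_geom_sum]
    split_ifs <;> simp
  have hone : ∀ n : ℕ, ((-1 : ℝ) ^ n) ^ 2 = 1 := fun n => by
    rw [← pow_mul, mul_comm, pow_mul]; simp
  refine ⟨(2 * |h| + T) * T + (|h| + T) ^ 2 + 1, by positivity, fun N => ?_⟩
  set A := ∑ n ∈ Finset.range (N + 1), ((-1) ^ n * h + t n) with hA
  set B := ∑ n ∈ Finset.range (N + 1), (2 * ((-1) ^ n * h) + t n) * t n with hB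
  have hAb : |A| ≤ |h| + T := by
    rw [hA, Finset.sum_add_distrib, ← Finset.sum_mul]
    refine (abs_add_le _ _).trans (add_le_add ?_ ?_)
    · rw [abs_mul]
      exact mul_le_of_le_one_left (abs_nonneg _) (halt _)
    · exact (Finset.abs_sum_le_sum_abs _ _).trans (hpart _)
  have hBb : |B| ≤ (2 * |h| + T) * T := by
    calc |B| ≤ ∑ n ∈ Finset.range (N + 1), |(2 * ((-1) ^ n * h) + t n) * t n| :=
          Finset.abs_sum_le_sum_abs _ _
      _ ≤ ∑ n ∈ Finset.range (N + 1), (2 * |h| + T) * |t n| := by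
          refine Finset.sum_le_sum fun n _ => ?_
          rw [abs_mul]
          refine mul_le_mul_of_nonneg_right ((abs_add_le _ _).trans ?_) (abs_nonneg _)
          refine add_le_add ?_ (hle n)
          simp [abs_mul]
      _ ≤ (2 * |h| + T) * T := by
          rw [← Finset.mul_sum]
          exact mul_le_mul_of_nonneg_left (hpart _) (by positivity)
  have hS1 : ∑ n ∈ Finset.range (N + 1), D n = ((N : ℝ) + 1) * L + A := by
    simp only [hD]
    rw [Finset.sum_add_distrib]
    simp [hA]
  have hS2 : ∑ n ∈ Finset.range (N + 1), D n ^ 2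
      = ((N : ℝ) + 1) * (L ^ 2 + h ^ 2) + 2 * L * A + B := by
    have hpt : ∀ n, D n ^ 2 = (L ^ 2 + h ^ 2) + 2 * L * ((-1) ^ n * h + t n)
        + (2 * ((-1) ^ n * h) + t n) * t n := fun n => by
      rw [hD]; linear_combination h ^ 2 * hone n
    simp only [hpt]
    rw [Finset.sum_add_distrib, Finset.sum_add_distrib, ← Finset.mul_sum]
    simp [hA, hB]
    ring
  have hN : (0 : ℝ) < (N : ℝ) + 1 := by positivity
  have hN1 : (1 : ℝ) ≤ (N : ℝ) + 1 := by simp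
  -- Shift invariance: `L` cancels, leaving only the bounded sums `A` and `B`.
  have hkey : (1 / ((N : ℝ) + 1)) * ∑ n ∈ Finset.range (N + 1), D n ^ 2
        - ((1 / ((N : ℝ) + 1)) * ∑ n ∈ Finset.range (N + 1), D n) ^ 2 - h ^ 2
      = (B - A ^ 2 / ((N : ℝ) + 1)) / ((N : ℝ) + 1) := by
    rw [hS1, hS2]; field_simp; ring
  rw [hkey, abs_div, abs_of_pos hN]
  gcongr
  have hA2 : |A ^ 2 / ((N : ℝ) + 1)| ≤ (|h| + T) ^ 2 := by
    rw [abs_div, abs_of_pos hN, abs_pow]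
    refine (div_le_self (by positivity) hN1).trans ?_
    gcongr
  linarith [abs_sub B (A ^ 2 / ((N : ℝ) + 1))]

/-- For a trajectory converging to a stable period-2 limit cycle `{x₀*, x₁*}` of `f`
(stability of the cycle for `g = f ∘ f`), the time average of a continuously differentiable
observable `O` exists and equals `(O(x₀*)+O(x₁*))/2`, and the drift variance converges to
`δ²/4` with `δ = (O(x₁*) − O(x₀*))/2`, at rate `O(1/N)`. -/
theorem driftVar_limit_cycle
    (f : ℝ → ℝ) (hg : ContDiff ℝ 1 (f ∘ f))
    (x0 x1 : ℝ) (hcyc0 : f x0 = x1) (hcyc1 : f x1 = x0)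
    (hder0 : |deriv (f ∘ f) x0| < 1) (hder1 : |deriv (f ∘ f) x1| < 1)
    (x : ℝ)
    (heven : Tendsto (fun m : ℕ => f^[2 * m] x) atTop (nhds x0))
    (hodd : Tendsto (fun m : ℕ => f^[2 * m + 1] x) atTop (nhds x1))
    (O : ℝ → ℝ) (hO : ContDiff ℝ 1 O) :
    Tendsto (fun N : ℕ => (1 / ((N : ℝ) + 1)) * ∑ n ∈ Finset.range (N + 1), O (f^[n] x))
        atTop (nhds ((O x0 + O x1) / 2)) ∧
    Tendsto (fun N : ℕ => driftVar f O x ((O x0 + O x1) / 2) N)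
        atTop (nhds (((O x1 - O x0) / 2) ^ 2 / 4)) ∧
    ∃ K > (0 : ℝ), ∀ N : ℕ, 1 ≤ N →
      |driftVar f O x ((O x0 + O x1) / 2) N - ((O x1 - O x0) / 2) ^ 2 / 4|
        ≤ K / ((N : ℝ) + 1) := by
  have hdiff : ∀ z, DifferentiableAt ℝ (f ∘ f) z := hg.differentiable one_ne_zero
  have hOdiff : ∀ z, DifferentiableAt ℝ O z := hO.differentiable one_ne_zero
  obtain ⟨r, hr, hr1⟩ := exists_between (max_lt hder0 hder1)
  have hr0 : 0 < r := (abs_nonneg _).trans_lt ((le_max_left _ _).trans_lt hr)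
  obtain ⟨C0, hC0⟩ := abs_observable_sub_le_geometric (O := O) (hdiff x0)
    (by simp [hcyc0, hcyc1]) ((le_max_left _ _).trans_lt hr)
    (fun m => by
      rw [show 2 * (m + 1) = 2 * m + 1 + 1 by ring, Function.iterate_succ_apply',
        Function.iterate_succ_apply']; rfl) heven (hOdiff x0)
  obtain ⟨C1, hC1⟩ := abs_observable_sub_le_geometric (O := O) (hdiff x1)
    (by simp [hcyc0, hcyc1]) ((le_max_right _ _).trans_lt hr)
    (fun m => by
      rw [show 2 * (m + 1) + 1 = 2 * m + 1 + 1 + 1 by ring, Function.iterate_succ_apply',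
        Function.iterate_succ_apply']; rfl) hodd (hOdiff x1)
  set c := (O x0 + O x1) / 2 with hc
  set d := (O x0 - O x1) / 2 with hd
  have hs0 : 0 < √r := Real.sqrt_pos.2 hr0
  have hs1 : √r < 1 := by rw [Real.sqrt_lt' one_pos]; simpa using hr1
  have hs2 : ∀ m : ℕ, √r ^ (2 * m) = r ^ m := fun m => by
    rw [pow_mul, Real.sq_sqrt hr0.le]
  -- The odd terms are `C1 * r ^ m = (C1 / √r) * √r ^ (2 * m + 1)`.
  have hbound : ∀ n, |(O (f^[n] x) - c) - (-1) ^ n * d| ≤ max C0 (C1 / √r) * √r ^ n := by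
    intro n
    rcases Nat.even_or_odd' n with ⟨m, rfl | rfl⟩
    · rw [hs2, pow_mul]
      calc _ = |O (f^[2 * m] x) - O x0| := by rw [hc, hd]; norm_num; ring_nf
        _ ≤ C0 * r ^ m := hC0 m
        _ ≤ _ := by gcongr; exact le_max_left _ _
    · calc _ = |O (f^[2 * m + 1] x) - O x1| := by
            rw [hc, hd, pow_succ, pow_mul]; norm_num; ring_nf
        _ ≤ C1 * r ^ m := hC1 m
        _ = C1 / √r * √r ^ (2 * m + 1) := by rw [pow_succ, hs2]; field_simp
        _ ≤ _ := by gcongr; exact le_max_right _ _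
  obtain ⟨L, t, ht, hdec⟩ := exists_drift_decomposition hs0.le hs1 hbound
  have hinv : Tendsto (fun N : ℕ => 1 / ((N : ℝ) + 1)) atTop (nhds 0) :=
    tendsto_one_div_add_atTop_nhds_zero_nat
  obtain ⟨K, hK0, hK⟩ := abs_variance_sub_le (D := drift f O x c) ht hdec
  have hsq : (d / 2) ^ 2 = ((O x1 - O x0) / 2) ^ 2 / 4 := by rw [hd]; ring
  rw [hsq] at hK
  refine ⟨?_, ?_, K, hK0, fun N _ => hK N⟩
  · -- The time average differs from `c` by `Δ_N / (N + 1)`, and the drift is bounded.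
    have hbd : ∀ N, |drift f O x c N| ≤ |L| + (|d / 2| + ∑' n, |t n|) := by
      intro N
      rw [drift, hdec]
      refine (abs_add_le _ _).trans (add_le_add le_rfl ((abs_add_le _ _).trans ?_))
      refine add_le_add ?_ (ht.le_tsum N fun _ _ => abs_nonneg _)
      simp [abs_mul]
    have hzero : Tendsto (fun N : ℕ => 1 / ((N : ℝ) + 1) * drift f O x c N) atTop (nhds 0) :=
      hinv.zero_mul_isBoundedUnder_le ⟨_, eventually_map.2 (.of_forall hbd)⟩
    have hadd := hzero.add_const c
    rw [zero_add] at hadd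
    refine hadd.congr fun N => ?_
    rw [drift, Finset.sum_sub_distrib]
    simp only [Finset.sum_const, Finset.card_range, nsmul_eq_mul]
    push_cast
    field_simp
    ring
  · rw [tendsto_iff_dist_tendsto_zero]
    refine squeeze_zero (fun _ => dist_nonneg) hK ?_
    simpa [div_eq_mul_inv] using hinv.const_mul K
end

section
/- Let ω ∈ (0, 2π) with ω ≠ π·k for any integer k making sin(ω/2) = 0 (i.e. sin(ω/2) ≠ 0), and let A ∈ ℝ. Define S_N = Σ_{r=−N}^{N} [(N−|r|)(N+1−|r|)(N+2−|r|) / (6(N+1)²)] · A cos(ω r). Then lim_{N→∞} S_N = A / (4 sin²(ω/2)). -/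
/-!
Write `T p N = ∑_{|r| ≤ N} p (N - |r|) cos (ω r)`. The weight `x (x+1) (x+2) / 6` of the drift
variance is obtained from the constant weight `1` by three discrete summations in `N`, through
`x + 1` (the Fejér kernel) and `(x+1) (x+2) / 2`. Summing the Dirichlet kernel three times with
the product-to-sum formulas gives the exact identity
`8 sin⁴(ω/2) T p N = 2 sin²(ω/2) (N+1)² - (1 - cos ((N+1) ω))` (`weightedSum_drift`).
Dividing by `(N+1)²`, the trigonometric term is bounded and therefore drops out in the limit.
-/

open Filter Real

/-- The cosine sum over `|r| ≤ N` with weight `p (N - |r|)`. -/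
noncomputable def weightedSum (ω : ℝ) (p : ℝ → ℝ) (N : ℕ) : ℝ :=
  ∑ r ∈ Finset.Icc (-(N : ℤ)) (N : ℤ), p ((N : ℝ) - |(r : ℝ)|) * Real.cos (ω * (r : ℝ))

lemma weightedSum_zero (ω : ℝ) (p : ℝ → ℝ) : weightedSum ω p 0 = p 0 := by
  simp [weightedSum]

/-- Increasing `N` shifts the weight by one and adds the two new end terms `r = ±(N+1)`. -/
lemma weightedSum_succ (ω : ℝ) (p : ℝ → ℝ) (N : ℕ) :
    weightedSum ω p (N + 1) =
      weightedSum ω (fun x => p (x + 1)) N + 2 * p 0 * Real.cos (((N : ℝ) + 1) * ω) := by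
  have hIcc : Finset.Icc (-((N + 1 : ℕ) : ℤ)) ((N + 1 : ℕ) : ℤ) =
      insert ((N : ℤ) + 1) (insert (-((N : ℤ) + 1)) (Finset.Icc (-(N : ℤ)) (N : ℤ))) := by
    ext x
    simp only [Finset.mem_Icc, Finset.mem_insert]
    omega
  have h1 : (N : ℤ) + 1 ∉ insert (-((N : ℤ) + 1)) (Finset.Icc (-(N : ℤ)) (N : ℤ)) := by
    simp only [Finset.mem_Icc, Finset.mem_insert]
    omega
  have h2 : -((N : ℤ) + 1) ∉ Finset.Icc (-(N : ℤ)) (N : ℤ) := by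
    simp only [Finset.mem_Icc]
    omega
  have habs : |(N : ℝ) + 1| = N + 1 := abs_of_nonneg (by positivity)
  unfold weightedSum
  rw [hIcc, Finset.sum_insert h1, Finset.sum_insert h2]
  push_cast
  rw [abs_neg, habs, sub_self, mul_neg, Real.cos_neg, mul_comm ω]
  have hsum : ∀ r ∈ Finset.Icc (-(N : ℤ)) (N : ℤ),
      p ((N : ℝ) + 1 - |(r : ℝ)|) * Real.cos (ω * (r : ℝ)) =
        p ((N : ℝ) - |(r : ℝ)| + 1) * Real.cos (ω * (r : ℝ)) := by
    intro r _
    rw [sub_add_eq_add_sub]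
  rw [Finset.sum_congr rfl hsum]
  ring

lemma weightedSum_add (ω : ℝ) (p q : ℝ → ℝ) (N : ℕ) :
    weightedSum ω (fun x => p x + q x) N = weightedSum ω p N + weightedSum ω q N := by
  simp only [weightedSum, add_mul, Finset.sum_add_distrib]

/-- If `q` is the backward difference of `p`, then `T p` is the discrete primitive of `T q`. -/
lemma weightedSum_succ_of_diff (ω : ℝ) (p q : ℝ → ℝ) (N : ℕ)
    (h : ∀ x, p (x + 1) = p x + q (x + 1)) (h0 : p 0 = q 0) :
    weightedSum ω p (N + 1) = weightedSum ω p N + weightedSum ω q (N + 1) := by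
  rw [weightedSum_succ ω p, weightedSum_succ ω q, funext h, weightedSum_add, h0]
  ring

/-- Dirichlet kernel. -/
lemma weightedSum_one (ω : ℝ) (N : ℕ) :
    Real.sin (ω / 2) * weightedSum ω (fun _ => 1) N =
      Real.sin (((N : ℝ) + 1) * ω - ω / 2) := by
  induction N with
  | zero =>
    rw [weightedSum_zero]
    push_cast
    ring_nf
  | succ N ih =>
    rw [weightedSum_succ, mul_add, ih]
    have e : ((N + 1 : ℕ) + 1 : ℝ) * ω - ω / 2 = ((N : ℝ) + 1) * ω + ω / 2 := by
      push_cast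
      ring
    rw [e, Real.sin_sub, Real.sin_add]
    ring

/-- `2 sin a sin (φ + a) = cos φ - cos (φ + 2a)` with `a = ω / 2`. -/
lemma two_mul_sin_half_mul_sin (ω φ : ℝ) :
    2 * Real.sin (ω / 2) * Real.sin (φ + ω / 2) = Real.cos φ - Real.cos (φ + ω) := by
  rw [Real.two_mul_sin_mul_sin, ← Real.cos_neg (ω / 2 - (φ + ω / 2))]
  ring_nf

/-- `2 sin a cos φ = sin (φ + a) - sin (φ - a)` with `a = ω / 2`. -/
lemma two_mul_sin_half_mul_cos (ω φ : ℝ) :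
    2 * Real.sin (ω / 2) * Real.cos φ = Real.sin (φ + ω / 2) - Real.sin (φ - ω / 2) := by
  rw [Real.sin_sub, Real.sin_add]
  ring

/-- Fejér kernel. -/
lemma weightedSum_fejer (ω : ℝ) (N : ℕ) :
    2 * Real.sin (ω / 2) ^ 2 * weightedSum ω (fun x => x + 1) N =
      1 - Real.cos (((N : ℝ) + 1) * ω) := by
  induction N with
  | zero =>
    rw [weightedSum_zero]
    have h := two_mul_sin_half_mul_sin ω 0
    simp only [zero_add, Real.cos_zero] at h
    simp only [Nat.cast_zero, zero_add, one_mul]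
    linear_combination h
  | succ N ih =>
    rw [weightedSum_succ_of_diff ω _ (fun _ => 1) N (fun x => by ring) (by norm_num)]
    have h0 := weightedSum_one ω (N + 1)
    have e : ((N + 1 : ℕ) + 1 : ℝ) * ω - ω / 2 = ((N : ℝ) + 1) * ω + ω / 2 := by
      push_cast
      ring
    have e' : ((N + 1 : ℕ) + 1 : ℝ) * ω = ((N : ℝ) + 1) * ω + ω := by
      push_cast
      ring
    rw [e] at h0
    rw [e']
    linear_combination ih + 2 * Real.sin (ω / 2) * h0
      + two_mul_sin_half_mul_sin ω (((N : ℝ) + 1) * ω)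

lemma weightedSum_triangular (ω : ℝ) (N : ℕ) :
    4 * Real.sin (ω / 2) ^ 3 * weightedSum ω (fun x => (x + 1) * (x + 2) / 2) N =
      (2 * N + 3) * Real.sin (ω / 2) - Real.sin (((N : ℝ) + 1) * ω + ω / 2) := by
  induction N with
  | zero =>
    rw [weightedSum_zero]
    have h := two_mul_sin_half_mul_sin ω 0
    have h' := two_mul_sin_half_mul_cos ω ω
    simp only [zero_add, Real.cos_zero] at h
    rw [sub_half] at h'
    simp only [Nat.cast_zero, zero_add, one_mul]
    linear_combination 2 * Real.sin (ω / 2) * h - h'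
  | succ N ih =>
    rw [weightedSum_succ_of_diff ω _ (fun x => x + 1) N (fun x => by ring) (by norm_num)]
    have h1 := weightedSum_fejer ω (N + 1)
    have h2 := two_mul_sin_half_mul_cos ω (((N + 1 : ℕ) + 1 : ℝ) * ω)
    have e : ((N + 1 : ℕ) + 1 : ℝ) * ω - ω / 2 = ((N : ℝ) + 1) * ω + ω / 2 := by
      push_cast
      ring
    rw [e] at h2
    have hc : ((N + 1 : ℕ) : ℝ) = N + 1 := by push_cast; ring
    rw [hc] at h1 h2 ⊢
    linear_combination ih + 2 * Real.sin (ω / 2) * h1 - h2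

/-- Exact closed form of the sum with the drift-variance weight. -/
lemma weightedSum_drift (ω : ℝ) (N : ℕ) :
    8 * Real.sin (ω / 2) ^ 4 * weightedSum ω (fun x => x * (x + 1) * (x + 2) / 6) N =
      2 * Real.sin (ω / 2) ^ 2 * ((N : ℝ) + 1) ^ 2 - (1 - Real.cos (((N : ℝ) + 1) * ω)) := by
  induction N with
  | zero =>
    rw [weightedSum_zero]
    have h := two_mul_sin_half_mul_sin ω 0
    simp only [zero_add, Real.cos_zero] at h
    simp only [Nat.cast_zero, zero_add, one_mul]
    linear_combination -h
  | succ N ih =>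
    -- The weight vanishes at `0`, so the end terms contribute nothing.
    have hstep : (fun x : ℝ => (x + 1) * (x + 1 + 1) * (x + 1 + 2) / 6) =
        fun x => x * (x + 1) * (x + 2) / 6 + (x + 1) * (x + 2) / 2 := by
      funext x
      ring
    rw [weightedSum_succ, hstep, weightedSum_add]
    have h2 := weightedSum_triangular ω N
    have h := two_mul_sin_half_mul_sin ω (((N : ℝ) + 1) * ω)
    have e' : ((N + 1 : ℕ) + 1 : ℝ) * ω = ((N : ℝ) + 1) * ω + ω := by
      push_cast
      ring
    rw [e']
    push_cast
    linear_combination ih + 2 * Real.sin (ω / 2) * h2 - h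

/-- For a quasi-periodic autocorrelation `C_r = A cos(ω r)` with `sin(ω/2) ≠ 0`, the mean
drift variance `S_N = Σ_{r=−N}^{N} (N−|r|)(N+1−|r|)(N+2−|r|)/(6(N+1)²) · A cos(ω r)`
saturates: `S_N → A/(4 sin²(ω/2))`. -/
theorem mean_drift_variance_saturation_pure_point
    (ω A : ℝ) (hω : ω ∈ Set.Ioo 0 (2 * Real.pi)) (hsin : Real.sin (ω / 2) ≠ 0) :
    Tendsto (fun N : ℕ => ∑ r ∈ Finset.Icc (-(N : ℤ)) (N : ℤ),
        (((N : ℝ) - |(r : ℝ)|) * ((N : ℝ) + 1 - |(r : ℝ)|) * ((N : ℝ) + 2 - |(r : ℝ)|)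
          / (6 * ((N : ℝ) + 1) ^ 2)) * (A * Real.cos (ω * (r : ℝ))))
      atTop (nhds (A / (4 * Real.sin (ω / 2) ^ 2))) := by
  have hclosed : ∀ N : ℕ, (∑ r ∈ Finset.Icc (-(N : ℤ)) (N : ℤ),
      (((N : ℝ) - |(r : ℝ)|) * ((N : ℝ) + 1 - |(r : ℝ)|) * ((N : ℝ) + 2 - |(r : ℝ)|)
        / (6 * ((N : ℝ) + 1) ^ 2)) * (A * Real.cos (ω * (r : ℝ)))) =
      A / (4 * Real.sin (ω / 2) ^ 2) -
        (1 / ((N : ℝ) + 1)) ^ 2 *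
          (A / (8 * Real.sin (ω / 2) ^ 4) * (1 - Real.cos (((N : ℝ) + 1) * ω))) := by
    intro N
    have hN : (N : ℝ) + 1 ≠ 0 := by positivity
    have hsum : (∑ r ∈ Finset.Icc (-(N : ℤ)) (N : ℤ),
        (((N : ℝ) - |(r : ℝ)|) * ((N : ℝ) + 1 - |(r : ℝ)|) * ((N : ℝ) + 2 - |(r : ℝ)|)
          / (6 * ((N : ℝ) + 1) ^ 2)) * (A * Real.cos (ω * (r : ℝ)))) =
        A / ((N : ℝ) + 1) ^ 2 * weightedSum ω (fun x => x * (x + 1) * (x + 2) / 6) N := by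
      rw [weightedSum, Finset.mul_sum]
      refine Finset.sum_congr rfl fun r _ => ?_
      field_simp
      ring
    have hd : weightedSum ω (fun x => x * (x + 1) * (x + 2) / 6) N =
        (2 * Real.sin (ω / 2) ^ 2 * ((N : ℝ) + 1) ^ 2
          - (1 - Real.cos (((N : ℝ) + 1) * ω))) / (8 * Real.sin (ω / 2) ^ 4) := by
      rw [eq_div_iff (by positivity), ← weightedSum_drift]
      ring
    rw [hsum, hd]
    field_simp
    ring
  simp only [hclosed]
  have h1 : Tendsto (fun N : ℕ => (1 / ((N : ℝ) + 1)) ^ 2) atTop (nhds 0) := by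
    simpa using (tendsto_one_div_add_atTop_nhds_zero_nat (𝕜 := ℝ)).pow 2
  have h2 : Tendsto (fun N : ℕ => (1 / ((N : ℝ) + 1)) ^ 2 *
      (A / (8 * Real.sin (ω / 2) ^ 4) * (1 - Real.cos (((N : ℝ) + 1) * ω))))
      atTop (nhds 0) := by
    refine h1.zero_mul_isBoundedUnder_le
      (isBoundedUnder_of ⟨|A / (8 * Real.sin (ω / 2) ^ 4)| * 2, fun N => ?_⟩)
    rw [Function.comp_apply, Real.norm_eq_abs, abs_mul]
    refine mul_le_mul_of_nonneg_left ?_ (abs_nonneg _)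
    rw [abs_le]
    constructor <;>
      linarith [Real.cos_le_one (((N : ℝ) + 1) * ω), Real.neg_one_le_cos (((N : ℝ) + 1) * ω)]
  simpa using tendsto_const_nhds.sub h2
end

section
/- Let (C_r)_{r∈ℤ} be a real even sequence (C_{−r} = C_r), and for r ≥ 1 define the averaged correlation C̄_r = (1/r) Σ_{s=1}^{r} C_s. Then for every N ≥ 1: Σ_{r=−N}^{N} [(N−|r|)(N+1−|r|)(N+2−|r|) / (6(N+1)²)] C_r = [N(N+2) / (6(N+1))] C_0 + Σ_{r=1}^{N} [r(N−r)(N+1−r) / (N+1)²] C̄_r. -/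
/-!
By evenness the two-sided sum folds to its `r = 0` term plus twice the sum over `1 ≤ r ≤ N`
(`sum_Icc_neg_of_even`). In the averaged sum the factor `r` cancels the `1 / r` in `C̄_r`, leaving
the partial sums `S_r = C_1 + ⋯ + C_r` with weights `(N - r)(N + 1 - r)`. Those weights are the
backward differences of `(N - r)(N + 1 - r)(N + 2 - r) / 3`, so summation by parts
(`sum_weight_mul_partial_sum`) recovers the weights of the folded sum; the boundary term
vanishes because it carries the factor `N - N`.
-/

theorem sum_Icc_neg_of_even (f : ℤ → ℝ) (hf : ∀ r, f (-r) = f r) (N : ℕ) :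
    ∑ r ∈ Finset.Icc (-(N : ℤ)) (N : ℤ), f r = f 0 + 2 * ∑ r ∈ Finset.Icc 1 N, f (r : ℤ) := by
  induction N with
  | zero => simp
  | succ n ih =>
    have h : Finset.Icc (-((n + 1 : ℕ) : ℤ)) ((n + 1 : ℕ) : ℤ)
        = insert (-((n + 1 : ℕ) : ℤ)) (insert ((n + 1 : ℕ) : ℤ)
            (Finset.Icc (-(n : ℤ)) (n : ℤ))) := by
      ext x
      simp only [Finset.mem_insert, Finset.mem_Icc]
      omega
    rw [h, Finset.sum_insert, Finset.sum_insert, ih, hf, Finset.sum_Icc_succ_top (by omega)]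
    · ring
    · simp only [Finset.mem_Icc]
      omega
    · simp only [Finset.mem_insert, Finset.mem_Icc]
      omega

/-- Summation by parts against the weights `(x - r)(x + 1 - r)`. Keeping `x` independent of the
upper limit `n` is what makes the induction on `n` go through. -/
theorem sum_weight_mul_partial_sum (c : ℕ → ℝ) (x : ℝ) (n : ℕ) :
    ∑ r ∈ Finset.Icc 1 n, (x - r) * (x + 1 - r) * ∑ s ∈ Finset.Icc 1 r, c s
      = ∑ s ∈ Finset.Icc 1 n, (x - s) * (x + 1 - s) * (x + 2 - s) / 3 * c s
        - (x - n - 1) * (x - n) * (x + 1 - n) / 3 * ∑ s ∈ Finset.Icc 1 n, c s := by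
  induction n with
  | zero => simp
  | succ n ih =>
    rw [Finset.sum_Icc_succ_top (by omega), ih, Finset.sum_Icc_succ_top (by omega),
      Finset.sum_Icc_succ_top (by omega)]
    push_cast
    ring

/-- Rewriting the fluctuation-dissipation sum in terms of Cesàro-averaged correlations
`C̄_r = (1/r) Σ_{s=1}^r C_s`: for every `N ≥ 1`,
`Σ_{r=−N}^{N} (N−|r|)(N+1−|r|)(N+2−|r|)/(6(N+1)²) C_r
  = N(N+2)/(6(N+1)) C_0 + Σ_{r=1}^{N} r(N−r)(N+1−r)/(N+1)² C̄_r`. -/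
theorem fluc_diss_in_terms_of_averaged_correlation
    (C : ℤ → ℝ) (heven : ∀ r : ℤ, C (-r) = C r) (N : ℕ) (hN : 1 ≤ N) :
    ∑ r ∈ Finset.Icc (-(N : ℤ)) (N : ℤ),
        (((N : ℝ) - |(r : ℝ)|) * ((N : ℝ) + 1 - |(r : ℝ)|) * ((N : ℝ) + 2 - |(r : ℝ)|)
          / (6 * ((N : ℝ) + 1) ^ 2)) * C r
      = ((N : ℝ) * ((N : ℝ) + 2) / (6 * ((N : ℝ) + 1))) * C 0
        + ∑ r ∈ Finset.Icc 1 N,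
            ((r : ℝ) * ((N : ℝ) - (r : ℝ)) * ((N : ℝ) + 1 - (r : ℝ)) / ((N : ℝ) + 1) ^ 2)
              * ((1 / (r : ℝ)) * ∑ s ∈ Finset.Icc 1 r, C (s : ℤ)) := by
  have hN1 : (N : ℝ) + 1 ≠ 0 := by positivity
  rw [sum_Icc_neg_of_even _ (fun r => by simp [heven])]
  have hcancel : ∀ r ∈ Finset.Icc 1 N,
      ((r : ℝ) * ((N : ℝ) - (r : ℝ)) * ((N : ℝ) + 1 - (r : ℝ)) / ((N : ℝ) + 1) ^ 2)
          * ((1 / (r : ℝ)) * ∑ s ∈ Finset.Icc 1 r, C (s : ℤ))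
        = (1 / ((N : ℝ) + 1) ^ 2)
          * (((N : ℝ) - r) * ((N : ℝ) + 1 - r) * ∑ s ∈ Finset.Icc 1 r, C (s : ℤ)) := by
    intro r hr
    have hr0 : (r : ℝ) ≠ 0 := by
      have := (Finset.mem_Icc.mp hr).1
      positivity
    field_simp
  rw [Finset.sum_congr rfl hcancel, ← Finset.mul_sum,
    sum_weight_mul_partial_sum (fun s => C (s : ℤ)), sub_self, mul_zero, zero_mul, zero_div,
    zero_mul, sub_zero, Finset.mul_sum, Finset.mul_sum]
  congr 1
  · simp only [Int.cast_zero, abs_zero, sub_zero]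
    field_simp
  · refine Finset.sum_congr rfl fun r _ => ?_
    simp only [Int.cast_natCast, Nat.abs_cast]
    field_simp
    ring
end

section
/- Let K ∈ ℝ and λ > 0, and set C_r = K e^{−λ|r|} for all integers r. Then lim_{N→∞} (1/N) Σ_{r=−N}^{N} [(N−|r|)(N+1−|r|)(N+2−|r|) / (6(N+1)²)] C_r = (K/6) coth(λ/2). -/
open Filter Real

/-!
After division by `N`, the weight multiplying `C_r` tends to `1/6` for each fixed `r` and lies
in `[0, 1]` for all `|r| ≤ N`. Since `r ↦ e^{-λ|r|}` is summable over `ℤ`, dominated convergence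
for series (Tannery's theorem) gives the limit `(1/6) ∑_{r ∈ ℤ} K e^{-λ|r|}`. With `q = e^{-λ}`,
two geometric series evaluate `∑_{r ∈ ℤ} q^{|r|} = (1 + q) / (1 - q) = coth (λ/2)`.
-/

theorem hasSum_int_exp_neg_mul_abs (lam : ℝ) (hlam : 0 < lam) :
    HasSum (fun r : ℤ => Real.exp (-lam * |(r : ℝ)|))
      (Real.cosh (lam / 2) / Real.sinh (lam / 2)) := by
  have hq1 : Real.exp (-lam) < 1 := by simpa using hlam
  have hg := hasSum_geometric_of_lt_one (Real.exp_pos (-lam)).le hq1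
  have h1 : HasSum (fun n : ℕ => Real.exp (-lam * |((n : ℤ) : ℝ)|)) (1 - Real.exp (-lam))⁻¹ := by
    have e (n : ℕ) : Real.exp (-lam * |((n : ℤ) : ℝ)|) = Real.exp (-lam) ^ n := by
      rw [← Real.exp_nat_mul]
      simp [mul_comm]
    simpa only [e] using hg
  have h2 : HasSum (fun n : ℕ => Real.exp (-lam * |((-((n : ℤ) + 1) : ℤ) : ℝ)|))
      (Real.exp (-lam) * (1 - Real.exp (-lam))⁻¹) := by
    have e (n : ℕ) : Real.exp (-lam * |((-((n : ℤ) + 1) : ℤ) : ℝ)|)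
        = Real.exp (-lam) * Real.exp (-lam) ^ n := by
      rw [← Real.exp_nat_mul, ← Real.exp_add]
      push_cast
      rw [abs_neg, abs_of_nonneg (by positivity)]
      ring_nf
    simpa only [e] using hg.mul_left (Real.exp (-lam))
  have h := HasSum.of_nat_of_neg_add_one (f := fun r : ℤ => Real.exp (-lam * |(r : ℝ)|)) h1 h2
  -- Multiply numerator and denominator of `(1 + q) / (1 - q)` by `e^{λ/2}`.
  have e1 : Real.exp (-lam) = Real.exp (-(lam / 2)) * Real.exp (-(lam / 2)) := by
    rw [← Real.exp_add]; ring_nf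
  have e2 : Real.exp (lam / 2) * Real.exp (-(lam / 2)) = 1 := by
    rw [← Real.exp_add]; simp
  have hs : Real.sinh (lam / 2) ≠ 0 := (Real.sinh_pos_iff.2 (by linarith)).ne'
  have hd : 1 - Real.exp (-lam) ≠ 0 := by linarith
  have key : Real.cosh (lam / 2) * (1 - Real.exp (-lam))
      = (1 + Real.exp (-lam)) * Real.sinh (lam / 2) := by
    rw [Real.cosh_eq, Real.sinh_eq, e1]
    linear_combination (-Real.exp (-(lam / 2))) * e2
  have hv : Real.cosh (lam / 2) / Real.sinh (lam / 2)
      = (1 - Real.exp (-lam))⁻¹ + Real.exp (-lam) * (1 - Real.exp (-lam))⁻¹ := by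
    rw [div_eq_iff hs, ← one_add_mul, mul_right_comm, ← key, mul_inv_cancel_right₀ hd]
  rwa [hv]

theorem tendsto_natCast_add_div_add (b c : ℝ) :
    Tendsto (fun N : ℕ => ((N : ℝ) + b) / ((N : ℝ) + c)) atTop (nhds 1) := by
  have := tendsto_add_mul_div_add_mul_atTop_nhds b c (1 : ℝ) (one_ne_zero (α := ℝ))
  simpa [add_comm] using this

theorem tendsto_drift_weight (a : ℝ) :
    Tendsto (fun N : ℕ => (1 / (N : ℝ)) *
        (((N : ℝ) - a) * ((N : ℝ) + 1 - a) * ((N : ℝ) + 2 - a) / (6 * ((N : ℝ) + 1) ^ 2)))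
      atTop (nhds (1 / 6)) := by
  have h := (((tendsto_natCast_add_div_add (-a) 0).mul
    (tendsto_natCast_add_div_add (1 - a) 1)).mul
    (tendsto_natCast_add_div_add (2 - a) 1)).const_mul (1 / 6 : ℝ)
  simp only [mul_one] at h
  refine h.congr fun N => ?_
  rw [add_zero, div_mul_div_comm, div_mul_div_comm, div_mul_div_comm, div_mul_div_comm]
  congr 1 <;> ring

theorem drift_weight_mem_Icc (N : ℕ) (a : ℝ) (ha : 0 ≤ a) (haN : a ≤ N) :
    (1 / (N : ℝ)) *
        (((N : ℝ) - a) * ((N : ℝ) + 1 - a) * ((N : ℝ) + 2 - a) / (6 * ((N : ℝ) + 1) ^ 2))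
      ∈ Set.Icc (0 : ℝ) 1 := by
  have h0 : (0 : ℝ) ≤ (N : ℝ) - a := by linarith
  have h1 : (0 : ℝ) ≤ (N : ℝ) + 1 - a := by linarith
  have h2 : (0 : ℝ) ≤ (N : ℝ) + 2 - a := by linarith
  refine ⟨by positivity, ?_⟩
  -- For `N = 0` the factor `1 / N` is `0`.
  rcases Nat.eq_zero_or_pos N with rfl | hN
  · simp
  have hN' : (0 : ℝ) < N := by exact_mod_cast hN
  rw [div_mul_div_comm, one_mul, div_le_one (by positivity)]
  calc ((N : ℝ) - a) * ((N : ℝ) + 1 - a) * ((N : ℝ) + 2 - a)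
      ≤ (N : ℝ) * ((N : ℝ) + 1) * ((N : ℝ) + 2) := by gcongr <;> linarith
    _ ≤ (N : ℝ) * ((N : ℝ) + 1) * (6 * ((N : ℝ) + 1)) := by gcongr; linarith
    _ = (N : ℝ) * (6 * ((N : ℝ) + 1) ^ 2) := by ring

/-- For exponentially decaying correlations `C_r = K e^{−λ|r|}` with `λ > 0`, the mean drift
variance grows linearly: `(1/N) Σ_{r=−N}^{N} (N−|r|)(N+1−|r|)(N+2−|r|)/(6(N+1)²) C_r
  → (K/6) coth(λ/2)`. -/
theorem strong_chaos_exponential_correlations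
    (K lam : ℝ) (hlam : 0 < lam) :
    Tendsto (fun N : ℕ => (1 / (N : ℝ)) * ∑ r ∈ Finset.Icc (-(N : ℤ)) (N : ℤ),
        (((N : ℝ) - |(r : ℝ)|) * ((N : ℝ) + 1 - |(r : ℝ)|) * ((N : ℝ) + 2 - |(r : ℝ)|)
          / (6 * ((N : ℝ) + 1) ^ 2)) * (K * Real.exp (-lam * |(r : ℝ)|)))
      atTop (nhds ((K / 6) * (Real.cosh (lam / 2) / Real.sinh (lam / 2)))) := by
  have hS := hasSum_int_exp_neg_mul_abs lam hlam
  have hlim := tendsto_tsum_of_dominated_convergence (𝓕 := (atTop : Filter ℕ))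
    (f := fun (N : ℕ) (r : ℤ) => if r ∈ Finset.Icc (-(N : ℤ)) (N : ℤ) then
      ((1 / (N : ℝ)) * (((N : ℝ) - |(r : ℝ)|) * ((N : ℝ) + 1 - |(r : ℝ)|) *
        ((N : ℝ) + 2 - |(r : ℝ)|) / (6 * ((N : ℝ) + 1) ^ 2))) *
        (K * Real.exp (-lam * |(r : ℝ)|)) else 0)
    (g := fun r : ℤ => (1 / 6) * (K * Real.exp (-lam * |(r : ℝ)|)))
    (bound := fun r : ℤ => |K| * Real.exp (-lam * |(r : ℝ)|))
    (hS.summable.mul_left _) ?_ ?_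
  · rw [((hS.mul_left K).mul_left (1 / 6)).tsum_eq] at hlim
    convert hlim using 2 with N
    · rw [tsum_eq_sum (s := Finset.Icc (-(N : ℤ)) (N : ℤ)) (fun r hr => if_neg hr),
        Finset.mul_sum]
      refine Finset.sum_congr rfl fun r hr => ?_
      rw [if_pos hr]
      exact (mul_assoc _ _ _).symm
    · ring
  · intro r
    refine ((tendsto_drift_weight |(r : ℝ)|).mul_const _).congr' ?_
    filter_upwards [eventually_ge_atTop r.natAbs] with N hN
    rw [if_pos (by rw [Finset.mem_Icc]; omega)]
  · refine Eventually.of_forall fun N r => ?_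
    split_ifs with hr
    · rw [Finset.mem_Icc] at hr
      have hr' : |(r : ℝ)| ≤ N := by exact_mod_cast abs_le.2 hr
      have hw := drift_weight_mem_Icc N _ (abs_nonneg (r : ℝ)) hr'
      rw [norm_mul, Real.norm_of_nonneg hw.1, norm_mul K, Real.norm_eq_abs K,
        Real.norm_of_nonneg (Real.exp_pos _).le]
      exact mul_le_of_le_one_left (by positivity) hw.2
    · rw [norm_zero]
      positivity
end
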